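/- Let N be a positive odd integer and let F : ℝ × ℝ → ℝ be smooth (C^∞). Then there exist smooth functions A, B : ℝ → ℝ such that F(r, r^{N/2}) = A(r) + r^{N/2} · B(r) for all r ≥ 0. -/

import Mathlib

/-!
Substitute `r = t²` with `t = √r ≥ 0`, so that `r^{N/2} = t^N`, and split the smooth function
`F (t², t^N)` of `t ∈ ℝ` into its even and odd parts. The even part is a smooth function `A` of
`t²` by Whitney's theorem on even functions (`exists_smooth_comp_sq`). The odd part is
`(F (t², t^N) - F (t², -t^N)) / 2`, which is `O(t^N)` at `0` because `F` is locally Lipschitz. By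
Hadamard's lemma it is `t^N * P t` with `P` smooth (`exists_smooth_eq_pow_mul`); as `N` is odd, `P`
is even, and Whitney's theorem gives `P t = B (t²)`.

Whitney's theorem is proved by iterating `f ↦ f' / (2t)`, which preserves smooth even functions by
Hadamard's lemma: the iterates, evaluated at `√u`, are the successive derivatives of `f (√u)` on
`u > 0` and extend continuously to `u = 0`. Borel's lemma (`exists_smooth_iteratedDeriv_eq`)
provides a smooth function on `u ≤ 0` with the same derivatives at `0`, and the two pieces glue.
-/

open Filter Topology Set

/-- If the function sequence `f k` satisfies `(f k)' = f (k + 1)` everywhere, then `f 0` is smooth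
(with `f k` its `k`-th derivative). -/
lemma contDiff_of_hasDerivAt_chain (f : ℕ → ℝ → ℝ)
    (h : ∀ k x, HasDerivAt (f k) (f (k + 1) x) x) : ContDiff ℝ (⊤ : ℕ∞) (f 0) := by
  have key : ∀ n : ℕ, ∀ k, ContDiff ℝ n (f k) := by
    intro n
    induction n with
    | zero =>
      intro k
      exact contDiff_zero.2
        (continuous_iff_continuousAt.2 fun x => (h k x).continuousAt)
    | succ n ih =>
      intro k
      have hd : deriv (f k) = f (k + 1) := funext fun x => (h k x).deriv
      push_cast
      rw [contDiff_succ_iff_deriv]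
      refine ⟨fun x => (h k x).differentiableAt, by simp, ?_⟩
      rw [hd]
      exact ih _
  exact contDiff_infty.2 fun n => key n 0

lemma hasDerivAt_iteratedDeriv {h : ℝ → ℝ} (hh : ContDiff ℝ (⊤ : ℕ∞) h) (k : ℕ) (x : ℝ) :
    HasDerivAt (iteratedDeriv k h) (iteratedDeriv (k + 1) h x) x := by
  rw [iteratedDeriv_succ]
  exact (hh.differentiable_iteratedDeriv k (by exact_mod_cast WithTop.coe_lt_top k) x).hasDerivAt

lemma continuous_iteratedDeriv_of_smooth {h : ℝ → ℝ} (hh : ContDiff ℝ (⊤ : ℕ∞) h) (k : ℕ) :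
    Continuous (iteratedDeriv k h) :=
  continuous_iff_continuousAt.2 fun x => (hasDerivAt_iteratedDeriv hh k x).continuousAt

/-- Hadamard's lemma in one variable; the quotient is `q t = ∫₀¹ h'(ts) ds`. -/
lemma exists_smooth_eq_mul {h : ℝ → ℝ} (hh : ContDiff ℝ (⊤ : ℕ∞) h) (h0 : h 0 = 0) :
    ∃ q : ℝ → ℝ, ContDiff ℝ (⊤ : ℕ∞) q ∧ ∀ t, h t = t * q t := by
  have hc := continuous_iteratedDeriv_of_smooth hh
  refine ⟨fun t => ∫ s in (0 : ℝ)..1, s ^ 0 * iteratedDeriv (0 + 1) h (t * s), ?_, ?_⟩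
  · refine contDiff_of_hasDerivAt_chain
      (fun k t => ∫ s in (0 : ℝ)..1, s ^ k * iteratedDeriv (k + 1) h (t * s)) ?_
    intro k t
    obtain ⟨C, hC⟩ := (isCompact_closedBall (0 : ℝ) (|t| + 1)).exists_bound_of_continuousOn
      (hc (k + 1 + 1)).continuousOn
    refine (intervalIntegral.hasDerivAt_integral_of_dominated_loc_of_deriv_le
      (F := fun t s => s ^ k * iteratedDeriv (k + 1) h (t * s))
      (F' := fun t s => s ^ (k + 1) * iteratedDeriv (k + 1 + 1) h (t * s))
      (bound := fun _ => C) (Metric.ball_mem_nhds t one_pos) ?_ ?_ ?_ ?_ ?_ ?_).2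
    · have := hc (k + 1)
      exact Eventually.of_forall fun x => Continuous.aestronglyMeasurable (by fun_prop)
    · have := hc (k + 1)
      exact Continuous.intervalIntegrable (by fun_prop) _ _
    · have := hc (k + 1 + 1)
      exact Continuous.aestronglyMeasurable (by fun_prop)
    · refine Eventually.of_forall fun s hs x hx => ?_
      rw [uIoc_of_le zero_le_one] at hs
      have hs1 : |s| ≤ 1 := by rw [abs_of_pos hs.1]; exact hs.2
      have hx1 : |x| ≤ |t| + 1 := by
        have h1 : |x - t| < 1 := by simpa [Real.dist_eq] using hx
        have h2 := abs_add_le (x - t) t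
        rw [sub_add_cancel] at h2
        linarith
      have h3 : ‖iteratedDeriv (k + 1 + 1) h (x * s)‖ ≤ C := by
        apply hC
        rw [mem_closedBall_zero_iff, Real.norm_eq_abs, abs_mul]
        nlinarith [abs_nonneg x, abs_nonneg s]
      rw [norm_mul, norm_pow, Real.norm_eq_abs s]
      have h4 : |s| ^ (k + 1) ≤ 1 := pow_le_one₀ (abs_nonneg s) hs1
      nlinarith [norm_nonneg (iteratedDeriv (k + 1 + 1) h (x * s))]
    · exact intervalIntegrable_const
    · refine Eventually.of_forall fun s _ x _ => ?_
      have h1 : HasDerivAt (fun x : ℝ => x * s) s x := hasDerivAt_mul_const s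
      have h2 := ((hasDerivAt_iteratedDeriv hh (k + 1) (x * s)).comp x h1).const_mul (s ^ k)
      exact h2.congr_deriv (by ring)
  · intro t
    have h1 : ∀ s ∈ uIcc (0 : ℝ) 1,
        HasDerivAt (fun s => h (t * s)) (t * iteratedDeriv 1 h (t * s)) s := by
      intro s _
      have h2 := hasDerivAt_iteratedDeriv hh 0 (t * s)
      rw [iteratedDeriv_zero] at h2
      have h3 := h2.comp s (hasDerivAt_const_mul t)
      rwa [mul_comm] at h3
    have := hc 1
    have h4 := intervalIntegral.integral_eq_sub_of_hasDerivAt h1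
      (Continuous.intervalIntegrable (by fun_prop) _ _)
    rw [intervalIntegral.integral_const_mul] at h4
    simpa [h0] using h4.symm

/-- Iterated Hadamard lemma: a smooth function that is `O(t ^ N)` at `0` is `t ^ N` times a smooth
function. -/
lemma exists_smooth_eq_pow_mul (N : ℕ) : ∀ {h : ℝ → ℝ}, ContDiff ℝ (⊤ : ℕ∞) h →
    h =O[𝓝[≠] 0] (fun t => t ^ N) →
    ∃ q : ℝ → ℝ, ContDiff ℝ (⊤ : ℕ∞) q ∧ ∀ t, h t = t ^ N * q t := by
  induction N with
  | zero => exact fun {h} hh _ => ⟨h, hh, by simp⟩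
  | succ N ih =>
    intro h hh hO
    have h0 : h 0 = 0 := by
      have h1 : Tendsto (fun t : ℝ => t ^ (N + 1)) (𝓝[≠] 0) (𝓝 0) := by
        have : Continuous (fun t : ℝ => t ^ (N + 1)) := by fun_prop
        simpa using this.continuousWithinAt (s := {0}ᶜ) (x := 0) |>.tendsto
      exact tendsto_nhds_unique (hh.continuous.continuousWithinAt.tendsto) (hO.trans_tendsto h1)
    obtain ⟨q, hq, hqe⟩ := exists_smooth_eq_mul hh h0
    have hqO : q =O[𝓝[≠] 0] (fun t => t ^ N) := by
      obtain ⟨C, hC⟩ := hO.bound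
      refine Asymptotics.IsBigO.of_bound C ?_
      filter_upwards [hC, self_mem_nhdsWithin] with t ht ht0
      have ht0' : 0 < ‖t‖ := norm_pos_iff.2 ht0
      rw [hqe, pow_succ, norm_mul, norm_mul] at ht
      refine le_of_mul_le_mul_left ?_ ht0'
      linarith
    obtain ⟨p, hp, hpe⟩ := ih hq hqO
    exact ⟨p, hp, fun t => by rw [hqe, hpe]; ring⟩

/-- Borel's lemma: every real sequence is the sequence of derivatives at `0` of a smooth function.
The function is `∑ cₙ / (n! λₙⁿ) φₙ(λₙ x)`, where `φₙ` is `xⁿ` times a bump function and `λₙ` grows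
fast enough for all series of derivatives to converge uniformly. -/
lemma exists_smooth_iteratedDeriv_eq (c : ℕ → ℝ) :
    ∃ b : ℝ → ℝ, ContDiff ℝ (⊤ : ℕ∞) b ∧ ∀ k, iteratedDeriv k b 0 = c k := by
  let χ : ContDiffBump (0 : ℝ) := ⟨1, 2, one_pos, one_lt_two⟩
  let φ : ℕ → ℝ → ℝ := fun n x => x ^ n * χ x
  have hφ : ∀ n, ContDiff ℝ (⊤ : ℕ∞) (φ n) := fun n => (contDiff_id.pow n).mul χ.contDiff
  have hφs : ∀ n, HasCompactSupport (φ n) := fun n => χ.hasCompactSupport.mul_left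
  have hM : ∀ n k, ∃ M, ∀ x, ‖iteratedDeriv k (φ n) x‖ ≤ M := by
    intro n k
    have h1 : HasCompactSupport (iteratedFDeriv ℝ k (φ n)) := (hφs n).iteratedFDeriv k
    obtain ⟨M, hM⟩ := h1.exists_bound_of_continuous
      ((hφ n).continuous_iteratedFDeriv (by exact_mod_cast le_top))
    exact ⟨M, fun x => by rw [← norm_iteratedFDeriv_eq_norm_iteratedDeriv]; exact hM x⟩
  choose M hM using hM
  have hM0 : ∀ n k, 0 ≤ M n k := fun n k => (norm_nonneg _).trans (hM n k 0)
  have hφ0 : ∀ n k, iteratedDeriv k (φ n) 0 = if n = k then (n.factorial : ℝ) else 0 := by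
    intro n k
    have h1 : φ n =ᶠ[𝓝 0] fun x => x ^ n := by
      filter_upwards [χ.eventuallyEq_one] with x hx
      simp [φ, hx]
    rw [h1.iteratedDeriv_eq, iteratedDeriv_fun_pow_zero]
    by_cases h : n = k
    · simp [h]
    · simp [h, Ne.symm h]
  -- `L n` dominates `2 ^ n * |c n| * M n k` for all `k < n`; this bounds the `k`-th derivative of
  -- the `n`-th term by `2 ^ (-n)` for all `n > k`.
  let L : ℕ → ℝ := fun n => 1 + |c n| * (∑ k ∈ Finset.range n, M n k) * 2 ^ n
  have hL : ∀ n, 1 ≤ L n := by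
    intro n
    have : 0 ≤ ∑ k ∈ Finset.range n, M n k := Finset.sum_nonneg fun k _ => hM0 n k
    have : 0 ≤ |c n| * (∑ k ∈ Finset.range n, M n k) * 2 ^ n := by positivity
    linarith
  let f : ℕ → ℝ → ℝ := fun n x => (c n / (n.factorial * L n ^ n)) * φ n (L n * x)
  have hf : ∀ n, ContDiff ℝ (⊤ : ℕ∞) (f n) := fun n =>
    contDiff_const.mul ((hφ n).comp (contDiff_const.mul contDiff_id))
  have hfd : ∀ n k x, iteratedDeriv k (f n) x =
      (c n / (n.factorial * L n ^ n)) * (L n ^ k * iteratedDeriv k (φ n) (L n * x)) := by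
    intro n k x
    have h1 : ContDiff ℝ k (φ n) := (hφ n).of_le (by exact_mod_cast le_top)
    have h2 := congrFun (iteratedDeriv_comp_const_mul h1 (L n)) x
    rw [iteratedDeriv_const_mul_field, h2]
  let v : ℕ → ℕ → ℝ := fun k n =>
    if k < n then (1 / 2) ^ n else ‖c n / (n.factorial * L n ^ n)‖ * (L n ^ k * M n k)
  have hv : ∀ k, Summable (v k) := by
    intro k
    refine (summable_congr_cofinite ?_).1 summable_geometric_two
    rw [Nat.cofinite_eq_atTop]
    filter_upwards [eventually_gt_atTop k] with n hn
    simp [v, hn]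
  have hfv : ∀ k n x, ‖iteratedFDeriv ℝ k (f n) x‖ ≤ v k n := by
    intro k n x
    have hL0 : 0 < L n := one_pos.trans_le (hL n)
    rw [norm_iteratedFDeriv_eq_norm_iteratedDeriv, hfd, norm_mul, norm_mul, norm_pow,
      Real.norm_of_nonneg hL0.le]
    by_cases hk : k < n
    · simp only [v, hk, if_true]
      have h1 : M n k ≤ ∑ k ∈ Finset.range n, M n k :=
        Finset.single_le_sum (f := fun k => M n k) (fun k _ => hM0 n k) (Finset.mem_range.2 hk)
      have h2 : |c n| * M n k * 2 ^ n ≤ L n := by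
        have : |c n| * M n k * 2 ^ n ≤ |c n| * (∑ k ∈ Finset.range n, M n k) * 2 ^ n := by gcongr
        simp only [L]
        linarith
      have h3 : L n * L n ^ k ≤ L n ^ n := by
        rw [← pow_succ']
        exact pow_le_pow_right₀ (hL n) hk
      have h4 : (1 : ℝ) ≤ n.factorial := by exact_mod_cast n.factorial_pos
      have h5 : ‖c n / (n.factorial * L n ^ n)‖ ≤ |c n| / L n ^ n := by
        rw [norm_div, norm_mul, norm_pow, Real.norm_of_nonneg hL0.le,
          Real.norm_of_nonneg (by positivity : (0 : ℝ) ≤ n.factorial), Real.norm_eq_abs]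
        gcongr
        exact le_mul_of_one_le_left (by positivity) h4
      calc _ ≤ |c n| / L n ^ n * (L n ^ k * M n k) := by
            gcongr
            exact hM n k _
        _ ≤ (1 / 2) ^ n := by
            rw [one_div, inv_pow, div_mul_eq_mul_div, div_le_iff₀ (by positivity),
              ← div_eq_inv_mul, le_div_iff₀ (by positivity)]
            calc |c n| * (L n ^ k * M n k) * 2 ^ n = |c n| * M n k * 2 ^ n * L n ^ k := by ring
              _ ≤ L n * L n ^ k := by gcongr
              _ ≤ L n ^ n := h3
    · simp only [v, hk, if_false]
      gcongr
      exact hM n k _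
  refine ⟨fun x => ∑' n, f n x, contDiff_tsum hf (fun k _ => hv k) fun k n x _ => hfv k n x, ?_⟩
  intro k
  have hs : Summable fun n => iteratedFDeriv ℝ k (f n) 0 :=
    Summable.of_norm_bounded (hv k) fun n => hfv k n 0
  have h1 : iteratedDeriv k (fun x => ∑' n, f n x) 0 = ∑' n, iteratedDeriv k (f n) 0 := by
    rw [iteratedDeriv_eq_iteratedFDeriv, iteratedFDeriv_tsum_apply hf (fun k _ => hv k)
      (fun k n x _ => hfv k n x) (by exact_mod_cast le_top)]
    simp only [iteratedDeriv_eq_iteratedFDeriv]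
    exact (ContinuousMultilinearMap.apply ℝ (fun _ : Fin k => ℝ) ℝ (fun _ => 1)).map_tsum hs
  rw [h1, tsum_eq_single k]
  · have : L k ≠ 0 := (one_pos.trans_le (hL k)).ne'
    have : (k.factorial : ℝ) ≠ 0 := by positivity
    rw [hfd, mul_zero, hφ0, if_pos rfl]
    field_simp
  · intro n hn
    rw [hfd, mul_zero, hφ0, if_neg hn, mul_zero, mul_zero]

/-- One step of Whitney's argument: for `f` even, the operator `(2t)⁻¹ d/dt`, which is `d/du` in the
variable `u = t²`, yields an even smooth function. -/
lemma exists_even_deriv_eq {f : ℝ → ℝ} (hf : ContDiff ℝ (⊤ : ℕ∞) f) (he : ∀ t, f (-t) = f t) :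
    ∃ q : ℝ → ℝ, (ContDiff ℝ (⊤ : ℕ∞) q ∧ ∀ t, q (-t) = q t) ∧
      ∀ t, HasDerivAt f (2 * t * q t) t := by
  have hd : ContDiff ℝ (⊤ : ℕ∞) (deriv f) := (contDiff_infty_iff_deriv.1 hf).2
  have hodd : ∀ t, deriv f (-t) = -deriv f t := by
    intro t
    have h1 := deriv_comp_neg f t
    simp only [he] at h1
    linarith
  obtain ⟨q, hq, hqe⟩ := exists_smooth_eq_mul hd (by have := hodd 0; simp at this; linarith)
  refine ⟨fun t => q t / 2, ⟨hq.div_const 2, fun t => ?_⟩, fun t => ?_⟩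
  · by_cases ht : t = 0
    · simp [ht]
    · have h1 := hodd t
      rw [hqe, hqe t] at h1
      have : t * (q (-t) - q t) = 0 := by linarith
      rcases mul_eq_zero.1 this with h | h
      · exact absurd h ht
      · simp only; linarith
  · have h1 := (hf.differentiable (by simp) t).hasDerivAt
    rw [hqe] at h1
    exact h1.congr_deriv (by ring)

/-- Whitney's theorem: an even smooth function is a smooth function of `t²`. On `u ≥ 0` the function
`g` is `f (√u)`; on `u < 0` it is a Borel function with matching derivatives at `0`. -/
lemma exists_smooth_comp_sq {f : ℝ → ℝ} (hf : ContDiff ℝ (⊤ : ℕ∞) f) (he : ∀ t, f (-t) = f t) :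
    ∃ g : ℝ → ℝ, ContDiff ℝ (⊤ : ℕ∞) g ∧ ∀ u, 0 ≤ u → f (√u) = g u := by
  let S := {f : ℝ → ℝ // ContDiff ℝ (⊤ : ℕ∞) f ∧ ∀ t, f (-t) = f t}
  have hstep : ∀ p : S, ∃ q : S, ∀ t, HasDerivAt p.1 (2 * t * q.1 t) t := by
    intro p
    obtain ⟨q, hq, hqd⟩ := exists_even_deriv_eq p.2.1 p.2.2
    exact ⟨⟨q, hq⟩, hqd⟩
  choose D hD using hstep
  let p : ℕ → S := fun k => Nat.rec ⟨f, hf, he⟩ (fun _ q => D q) k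
  have hp : ∀ k t, HasDerivAt (p k).1 (2 * t * (p (k + 1)).1 t) t := fun k t => hD (p k) t
  obtain ⟨b, hb, hb0⟩ := exists_smooth_iteratedDeriv_eq fun k => (p k).1 0
  let g : ℕ → ℝ → ℝ := fun k u => if 0 ≤ u then (p k).1 (√u) else iteratedDeriv k b u
  have hgpos : ∀ k u, 0 ≤ u → g k u = (p k).1 (√u) := fun k u hu => if_pos hu
  have hgneg : ∀ k u, u ≤ 0 → g k u = iteratedDeriv k b u := by
    intro k u hu
    rcases hu.lt_or_eq with h | rfl
    · exact if_neg h.not_ge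
    · rw [hb0, hgpos k 0 le_rfl, Real.sqrt_zero]
  have hdpos : ∀ k u, 0 < u → HasDerivAt (g k) (g (k + 1) u) u := by
    intro k u hu
    have h1 := (hp k (√u)).comp u (Real.hasDerivAt_sqrt hu.ne')
    have h2 : g k =ᶠ[𝓝 u] (p k).1 ∘ Real.sqrt := by
      filter_upwards [lt_mem_nhds hu] with x hx
      exact hgpos k x hx.le
    refine HasDerivAt.congr_of_eventuallyEq ?_ h2
    refine h1.congr_deriv ?_
    rw [hgpos (k + 1) u hu.le]
    have : √u ≠ 0 := (Real.sqrt_pos.2 hu).ne'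
    field_simp
  have hcont : ∀ k, ContinuousWithinAt (g k) (Ioi 0) 0 := by
    intro k
    have h1 : Continuous ((p k).1 ∘ Real.sqrt) :=
      (p k).2.1.continuous.comp Real.continuous_sqrt
    exact h1.continuousWithinAt.congr (fun x hx => hgpos k x (le_of_lt hx)) (hgpos k 0 le_rfl)
  refine ⟨g 0, contDiff_of_hasDerivAt_chain g fun k u => ?_, fun u hu => (hgpos 0 u hu).symm⟩
  rcases lt_trichotomy u 0 with hu | rfl | hu
  · rw [hgneg (k + 1) u hu.le]
    refine (hasDerivAt_iteratedDeriv hb k u).congr_of_eventuallyEq ?_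
    filter_upwards [gt_mem_nhds hu] with x hx
    exact hgneg k x (le_of_lt hx)
  · have hl : HasDerivWithinAt (g k) (g (k + 1) 0) (Iic 0) 0 := by
      rw [hgneg (k + 1) 0 le_rfl]
      exact (hasDerivAt_iteratedDeriv hb k 0).hasDerivWithinAt.congr
        (fun x hx => hgneg k x hx) (hgneg k 0 le_rfl)
    have hr : HasDerivWithinAt (g k) (g (k + 1) 0) (Ici 0) 0 := by
      refine hasDerivWithinAt_Ici_of_tendsto_deriv (s := Ioi 0)
        (fun x hx => (hdpos k x hx).differentiableAt.differentiableWithinAt) (hcont k)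
        self_mem_nhdsWithin ?_
      refine (hcont (k + 1)).tendsto.congr' ?_
      filter_upwards [self_mem_nhdsWithin] with x hx
      exact (hdpos k x hx).deriv.symm
    have := hl.union hr
    rwa [Iic_union_Ici, hasDerivWithinAt_univ] at this
  · exact hdpos k u hu

/-- For smooth `F : ℝ × ℝ → ℝ` and `N` a positive odd integer,
there are smooth `A, B : ℝ → ℝ` with `F(r, r^{N/2}) = A(r) + r^{N/2}·B(r)` for all
`r ≥ 0` (here `r^{N/2}` is the real power). -/
theorem stmt_19 (N : ℕ) (hN : Odd N) (hNpos : 0 < N)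
    (F : ℝ × ℝ → ℝ) (hF : ContDiff ℝ (⊤ : ℕ∞) F) :
    ∃ A B : ℝ → ℝ, ContDiff ℝ (⊤ : ℕ∞) A ∧ ContDiff ℝ (⊤ : ℕ∞) B ∧
      ∀ r : ℝ, 0 ≤ r → F (r, r ^ ((N : ℝ) / 2)) = A r + r ^ ((N : ℝ) / 2) * B r := by
  have hplus : ContDiff ℝ (⊤ : ℕ∞) fun t : ℝ => F (t ^ 2, t ^ N) := hF.comp (by fun_prop)
  have hminus : ContDiff ℝ (⊤ : ℕ∞) fun t : ℝ => F (t ^ 2, -t ^ N) := hF.comp (by fun_prop)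
  obtain ⟨A, hA, hAe⟩ := exists_smooth_comp_sq
    (f := fun t : ℝ => (F (t ^ 2, t ^ N) + F (t ^ 2, -t ^ N)) / 2)
    ((hplus.add hminus).div_const 2)
    (fun t => by simp only [hN.neg_pow, neg_neg, even_two.neg_pow]; ring)
  have hO : (fun t : ℝ => (F (t ^ 2, t ^ N) - F (t ^ 2, -t ^ N)) / 2) =O[𝓝[≠] 0]
      (fun t => t ^ N) := by
    obtain ⟨K, s, hs, hK⟩ :=
      ((hF.of_le (by exact_mod_cast le_top)).contDiffAt (x := ((0 : ℝ), (0 : ℝ)))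
        (n := 1)).exists_lipschitzOnWith
    have hlim : ∀ ε : ℝ, Tendsto (fun t : ℝ => (t ^ 2, ε * t ^ N)) (𝓝 0) (𝓝 (0, 0)) := by
      intro ε
      have : Continuous fun t : ℝ => (t ^ 2, ε * t ^ N) := by fun_prop
      simpa [hNpos.ne'] using this.tendsto 0
    refine Asymptotics.IsBigO.of_bound K (nhdsWithin_le_nhds ?_)
    filter_upwards [hlim 1 hs, hlim (-1) hs] with t h1 h2
    simp only [mem_preimage, one_mul, neg_mul] at h1 h2
    have h3 := hK.dist_le_mul _ h1 _ h2
    have h4 : dist (t ^ 2, t ^ N) (t ^ 2, -t ^ N) = 2 * ‖t ^ N‖ := by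
      rw [Prod.dist_eq, dist_self, Real.dist_eq, sub_neg_eq_add, ← two_mul, abs_mul, abs_two,
        max_eq_right (by positivity), Real.norm_eq_abs]
    rw [h4, Real.dist_eq] at h3
    rw [norm_div, Real.norm_two, Real.norm_eq_abs, div_le_iff₀ two_pos]
    linarith
  obtain ⟨P, hP, hPe⟩ := exists_smooth_eq_pow_mul N ((hplus.sub hminus).div_const 2) hO
  have hPeven : ∀ t, P (-t) = P t := by
    intro t
    by_cases ht : t = 0
    · simp [ht]
    · have h1 := hPe t
      have h2 := hPe (-t)
      simp only [hN.neg_pow, neg_neg, even_two.neg_pow] at h1 h2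
      have h3 : t ^ N * (P (-t) - P t) = 0 := by linarith
      rcases mul_eq_zero.1 h3 with h | h
      · exact absurd h (pow_ne_zero N ht)
      · linarith
  obtain ⟨B, hB, hBe⟩ := exists_smooth_comp_sq hP hPeven
  refine ⟨A, B, hA, hB, fun r hr => ?_⟩
  have hpow : r ^ ((N : ℝ) / 2) = √r ^ N := by
    rw [Real.sqrt_eq_rpow, ← Real.rpow_natCast, ← Real.rpow_mul hr]
    congr 1
    ring
  rw [hpow, ← hAe r hr, ← hBe r hr, ← hPe]
  simp only [Real.sq_sqrt hr]
  ring
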